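/- arXiv:quant-ph/0507115 — 2 statements merged into one kernel-verified Lean document; each statement's English description precedes it below -/
import Mathlib

section
/- Fix a real m. For ε > 0 and T ∈ ℝ define the regularized free-particle kernel K_{ε,T} : ℝ × ℝ³ → ℂ by K_{ε,T}(x⁰, x⃗) := (4π(ε − iT))^{−1/2} (4π(ε + iT))^{−3/2} exp( −(x⁰)²/(4(ε − iT)) − |x⃗|²/(4(ε + iT)) − (ε + iT)m² ). Then for every N ≥ 1, all ε₁, …, ε_N > 0, all T₁, …, T_N ∈ ℝ, and all q₀, q_N ∈ ℝ⁴, one has ∫_{(ℝ⁴)^{N−1}} ∏_{j=1}^{N} K_{ε_j, T_j}(q_j − q_{j−1}) dq₁ ⋯ dq_{N−1} = K_{ε₁+⋯+ε_N, T₁+⋯+T_N}(q_N − q₀), the integral over the intermediate points being absolutely convergent. -/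
open MeasureTheory Complex

/-- The chain of spacetime points `q₀, q₁, …, q_N`: the endpoints are fixed and
the intermediate points are the integration variables `z : Fin (N-1) → α`. -/
def chainPoint {α : Type*} (N : ℕ) (q0 qN : α) (z : Fin (N - 1) → α)
    (k : Fin (N + 1)) : α :=
  if _h0 : (k : ℕ) = 0 then q0
  else if _hN : (k : ℕ) = N then qN
  else z ⟨(k : ℕ) - 1, by have := k.isLt; omega⟩

/-- The `ε`-regularized free scalar particle kernel `K_{ε,T}(x⁰, x⃗)` of mass
`m` in Minkowski spacetime with signature `(−,+,+,+)`; powers are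
principal-branch complex powers. -/
noncomputable def Kreg (m ε T : ℝ) (x : ℝ × EuclideanSpace ℝ (Fin 3)) : ℂ :=
  (4 * (Real.pi : ℂ) * ((ε : ℂ) - Complex.I * T)) ^ (-(1 / 2) : ℂ) *
    (4 * (Real.pi : ℂ) * ((ε : ℂ) + Complex.I * T)) ^ (-(3 / 2) : ℂ) *
    Complex.exp (-((x.1 ^ 2 : ℝ) : ℂ) / (4 * ((ε : ℂ) - Complex.I * T)) -
      ((‖x.2‖ ^ 2 : ℝ) : ℂ) / (4 * ((ε : ℂ) + Complex.I * T)) -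
      ((ε : ℂ) + Complex.I * T) * (m : ℂ) ^ 2)

section Chain

variable {α : Type*}

lemma chainPoint_cons_succ (n : ℕ) (q0 qN a : α) (z : Fin n → α) (k : Fin (n + 2)) :
    chainPoint (n + 2) q0 qN (Fin.cons a z : Fin (n + 1) → α) k.succ =
      chainPoint (n + 1) a qN z k := by
  obtain ⟨k, hk⟩ := k
  rcases k with _ | k
  · simp [chainPoint]
  · by_cases h : k = n
    · simp [chainPoint, h]
    · simp [chainPoint, h]
      rfl

lemma continuous_chainPoint [TopologicalSpace α] (N : ℕ) (qN : α) (k : Fin (N + 1)) :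
    Continuous fun p : α × (Fin (N - 1) → α) => chainPoint N p.1 qN p.2 k := by
  unfold chainPoint
  split_ifs <;> fun_prop

/-- The integrand of the composition of the kernels `K j` along the chain `q0, z, qN`. -/
def chainProd [AddGroup α] (N : ℕ) (K : Fin N → α → ℂ) (q0 qN : α) (z : Fin (N - 1) → α) : ℂ :=
  ∏ j : Fin N, K j (chainPoint N q0 qN z j.succ - chainPoint N q0 qN z j.castSucc)

lemma chainProd_one [AddGroup α] (K : Fin 1 → α → ℂ) (q0 qN : α) (z : Fin 0 → α) :
    chainProd 1 K q0 qN z = K 0 (qN - q0) := by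
  simp [chainProd, chainPoint]

lemma chainProd_cons [AddGroup α] (n : ℕ) (K : Fin (n + 2) → α → ℂ) (q0 qN a : α)
    (z : Fin n → α) :
    chainProd (n + 2) K q0 qN (Fin.cons a z : Fin (n + 1) → α) =
      K 0 (a - q0) * chainProd (n + 1) (fun j => K j.succ) a qN z := by
  unfold chainProd
  rw [Fin.prod_univ_succ]
  congr 1
  refine Finset.prod_congr rfl fun j _ => ?_
  rw [chainPoint_cons_succ, ← Fin.succ_castSucc, chainPoint_cons_succ]

lemma chainProd_piFinSuccAbove_symm [AddGroup α] [MeasurableSpace α] (n : ℕ)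
    (K : Fin (n + 2) → α → ℂ) (q0 qN : α) (p : α × (Fin n → α)) :
    chainProd (n + 2) K q0 qN
        ((MeasurableEquiv.piFinSuccAbove (fun _ : Fin (n + 1) => α) 0).symm p) =
      K 0 (p.1 - q0) * chainProd (n + 1) (fun j => K j.succ) p.1 qN p.2 := by
  rw [← chainProd_cons]
  simp [MeasurableEquiv.piFinSuccAbove_symm_apply, Fin.insertNthEquiv]

lemma continuous_chainProd [AddGroup α] [TopologicalSpace α] [ContinuousSub α] (N : ℕ)
    {K : Fin N → α → ℂ} (hK : ∀ j, Continuous (K j)) (qN : α) :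
    Continuous fun p : α × (Fin (N - 1) → α) => chainProd N K p.1 qN p.2 := by
  unfold chainProd
  exact continuous_finsetProd _ fun j _ => (hK j).comp
    ((continuous_chainPoint N qN j.succ).sub (continuous_chainPoint N qN j.castSucc))

variable [AddGroup α] [TopologicalSpace α] [IsTopologicalAddGroup α] [SecondCountableTopology α]
  [MeasureSpace α] [BorelSpace α] [SigmaFinite (volume : Measure α)]
  [(volume : Measure α).IsAddRightInvariant]

/-- Chain products of bounded integrable continuous kernels are absolutely integrable, uniformly
in the endpoints. -/
lemma integrable_chainProd (n : ℕ) {K : Fin (n + 1) → α → ℂ} (hc : ∀ j, Continuous (K j))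
    (hi : ∀ j, Integrable (K j)) (hb : ∀ j, ∃ C, ∀ x, ‖K j x‖ ≤ C) :
    (∀ q0 qN, Integrable (fun z : Fin n → α => chainProd (n + 1) K q0 qN z)) ∧
      ∃ M, ∀ q0 qN, ∫ z : Fin n → α, ‖chainProd (n + 1) K q0 qN z‖ ≤ M := by
  induction n with
  | zero =>
    obtain ⟨C, hC⟩ := hb 0
    have h (q0 qN : α) (z : Fin 0 → α) : chainProd (0 + 1) K q0 qN z = K 0 (qN - q0) :=
      chainProd_one K q0 qN z
    refine ⟨fun q0 qN => ?_, C, fun q0 qN => ?_⟩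
    · simp only [h]
      exact integrable_const_iff.2 (Or.inr ⟨by simp [volume_pi]⟩)
    · simp only [h, integral_const]
      simpa [volume_pi, Measure.real] using hC (qN - q0)
  | succ n ih =>
    obtain ⟨hI, M, hM⟩ := ih (fun j => hc j.succ) (fun j => hi j.succ) (fun j => hb j.succ)
    have hmp := (volume_preserving_piFinSuccAbove (fun _ : Fin (n + 1) => α) 0).symm
    have hbound (q0 qN a : α) :
        ∫ z : Fin n → α, ‖K 0 (a - q0) * chainProd (n + 1) (fun j => K j.succ) a qN z‖ ≤
          ‖K 0 (a - q0)‖ * M := by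
      simp only [norm_mul, integral_const_mul]
      exact mul_le_mul_of_nonneg_left (hM a qN) (norm_nonneg _)
    have hnorm (q0 : α) : Integrable fun a => ‖K 0 (a - q0)‖ * M :=
      ((hi 0).comp_sub_right q0).norm.mul_const M
    have hprod (q0 qN : α) : Integrable fun p : α × (Fin n → α) =>
        K 0 (p.1 - q0) * chainProd (n + 1) (fun j => K j.succ) p.1 qN p.2 := by
      have hcont : Continuous fun p : α × (Fin n → α) =>
          K 0 (p.1 - q0) * chainProd (n + 1) (fun j => K j.succ) p.1 qN p.2 :=
        ((hc 0).comp (continuous_fst.sub continuous_const)).mul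
          (continuous_chainProd (n + 1) (fun j => hc j.succ) qN)
      have hmeas := hcont.aestronglyMeasurable (μ := (volume : Measure α).prod volume)
      refine (integrable_prod_iff hmeas).2
        ⟨.of_forall fun a => (hI a qN).const_mul (K 0 (a - q0)), (hnorm q0).mono'
          hmeas.norm.integral_prod_right' (.of_forall fun a => ?_)⟩
      rw [Real.norm_of_nonneg (integral_nonneg fun _ => norm_nonneg _)]
      exact hbound q0 qN a
    refine ⟨fun q0 qN => ?_, ∫ a, ‖K 0 a‖ * M, fun q0 qN => ?_⟩
    · rw [← hmp.integrable_comp_emb (MeasurableEquiv.measurableEmbedding _)]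
      exact (hprod q0 qN).congr (.of_forall fun p => (chainProd_piFinSuccAbove_symm n K q0 qN p).symm)
    · rw [← hmp.integral_comp']
      simp only [chainProd_piFinSuccAbove_symm]
      rw [Measure.volume_eq_prod, integral_prod _ (hprod q0 qN).norm]
      calc _ ≤ ∫ a, ‖K 0 (a - q0)‖ * M :=
            integral_mono (hprod q0 qN).norm.integral_prod_left (hnorm q0) (hbound q0 qN)
        _ = _ := integral_sub_right_eq_self (fun a => ‖K 0 a‖ * M) q0

lemma integral_chainProd_succ (n : ℕ) {K : Fin (n + 2) → α → ℂ} (hc : ∀ j, Continuous (K j))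
    (hi : ∀ j, Integrable (K j)) (hb : ∀ j, ∃ C, ∀ x, ‖K j x‖ ≤ C) (q0 qN : α) :
    ∫ z : Fin (n + 1) → α, chainProd (n + 2) K q0 qN z =
      ∫ a, K 0 (a - q0) * ∫ z : Fin n → α, chainProd (n + 1) (fun j => K j.succ) a qN z := by
  have hmp := (volume_preserving_piFinSuccAbove (fun _ : Fin (n + 1) => α) 0).symm
  have hint := (hmp.integrable_comp_emb (MeasurableEquiv.measurableEmbedding _)).2
    ((integrable_chainProd (n + 1) hc hi hb).1 q0 qN)
  simp only [Function.comp_def, chainProd_piFinSuccAbove_symm] at hint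
  rw [← hmp.integral_comp']
  simp only [chainProd_piFinSuccAbove_symm]
  rw [Measure.volume_eq_prod, integral_prod _ hint]
  simp only [integral_const_mul]

end Chain

/-- The complex power is multiplicative across two factorizations of the same number into
factors with positive real part. -/
lemma cpow_mul_cpow_eq_of_mul_eq {a b c d : ℂ} (ha : 0 < a.re) (hb : 0 < b.re) (hc : 0 < c.re)
    (hd : 0 < d.re) (h : a * b = c * d) (s : ℂ) : a ^ s * b ^ s = c ^ s * d ^ s := by
  have key {u v : ℂ} (hu : 0 < u.re) (hv : 0 < v.re) : (u * v) ^ s = u ^ s * v ^ s := by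
    have hu0 : u ≠ 0 := fun h => by simp [h] at hu
    have hv0 : v ≠ 0 := fun h => by simp [h] at hv
    have h1 := abs_lt.1 (abs_arg_lt_pi_div_two_iff.2 (Or.inl hu))
    have h2 := abs_lt.1 (abs_arg_lt_pi_div_two_iff.2 (Or.inl hv))
    rw [cpow_def_of_ne_zero (mul_ne_zero hu0 hv0), cpow_def_of_ne_zero hu0,
      cpow_def_of_ne_zero hv0, Complex.log_mul hu0 hv0 ⟨by linarith, by linarith⟩, add_mul,
      Complex.exp_add]
  rw [← key ha hb, ← key hc hd, h]

section HeatKernel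

lemma inv_four_mul_re_pos {A : ℂ} (hA : 0 < A.re) : 0 < ((4 * A)⁻¹).re := by
  have hA' : A ≠ 0 := fun h => by simp [h] at hA
  rw [Complex.inv_re]
  exact div_pos (by simpa using hA) (Complex.normSq_pos.2 (by simpa using hA'))

variable {V : Type*} [NormedAddCommGroup V] [InnerProductSpace ℝ V]

/-- The Gaussian heat kernel on `V` at complex time `A`. -/
noncomputable def complexHeatKernel (A : ℂ) (v : V) : ℂ :=
  (4 * (Real.pi : ℂ) * A) ^ (-(Module.finrank ℝ V / 2) : ℂ) *
    Complex.exp (-(‖v‖ : ℂ) ^ 2 / (4 * A))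

lemma continuous_complexHeatKernel (A : ℂ) :
    Continuous (complexHeatKernel A : V → ℂ) := by
  unfold complexHeatKernel
  fun_prop

lemma norm_complexHeatKernel_le {A : ℂ} (hA : 0 < A.re) :
    ∃ C, ∀ v : V, ‖complexHeatKernel A v‖ ≤ C := by
  refine ⟨‖(4 * (Real.pi : ℂ) * A) ^ (-(Module.finrank ℝ V / 2) : ℂ)‖, fun v => ?_⟩
  rw [complexHeatKernel, norm_mul]
  refine mul_le_of_le_one_right (norm_nonneg _) ?_
  rw [Complex.norm_exp, Real.exp_le_one_iff, div_eq_mul_inv, neg_mul, Complex.neg_re,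
    ← Complex.ofReal_pow, Complex.re_ofReal_mul]
  have := inv_four_mul_re_pos hA
  have : 0 ≤ ‖v‖ ^ 2 * ((4 * A)⁻¹).re := by positivity
  linarith

variable [FiniteDimensional ℝ V] [MeasurableSpace V] [BorelSpace V]

lemma integrable_complexHeatKernel {A : ℂ} (hA : 0 < A.re) :
    Integrable (complexHeatKernel A : V → ℂ) := by
  unfold complexHeatKernel
  refine Integrable.const_mul ?_ _
  refine (GaussianFourier.integrable_cexp_neg_mul_sq_norm_add (V := V)
    (inv_four_mul_re_pos hA) 0 0).congr (.of_forall fun v => ?_)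
  simp only [zero_mul, add_zero, div_eq_mul_inv]
  congr 1
  ring

/-- Semigroup property of the heat kernel at complex times. -/
lemma integral_complexHeatKernel_mul {A B : ℂ} (hA : 0 < A.re) (hB : 0 < B.re) (q r : V) :
    ∫ v : V, complexHeatKernel A (v - q) * complexHeatKernel B (r - v) =
      complexHeatKernel (A + B) (r - q) := by
  have hA0 : A ≠ 0 := fun h => by simp [h] at hA
  have hB0 : B ≠ 0 := fun h => by simp [h] at hB
  have hAB : 0 < (A + B).re := by simpa using add_pos hA hB
  have hAB0 : A + B ≠ 0 := fun h => by simp [h] at hAB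
  have hpi : (Real.pi : ℂ) ≠ 0 := by exact_mod_cast Real.pi_ne_zero
  set w := r - q with hw
  set b : ℂ := (4 * A)⁻¹ + (4 * B)⁻¹ with hb
  have hbre : 0 < b.re := by
    simpa [b] using add_pos (inv_four_mul_re_pos hA) (inv_four_mul_re_pos hB)
  have hb' : b = (A + B) / (4 * A * B) := by rw [hb]; field_simp; ring
  have hb0 : b ≠ 0 := fun h => by simp [h] at hbre
  have hpib : 0 < ((Real.pi : ℂ) / b).re := by
    rw [div_eq_mul_inv, Complex.re_ofReal_mul, Complex.inv_re]
    exact mul_pos Real.pi_pos (div_pos hbre (Complex.normSq_pos.2 hb0))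
  have h4 {z : ℂ} (hz : 0 < z.re) : 0 < (4 * (Real.pi : ℂ) * z).re := by
    have : (4 * (Real.pi : ℂ) * z) = ((4 * Real.pi : ℝ) : ℂ) * z := by push_cast; ring
    rw [this, Complex.re_ofReal_mul]
    exact mul_pos (by positivity) hz
  have hpow := cpow_mul_cpow_eq_of_mul_eq (h4 hA) (h4 hB) (h4 hAB) hpib
    (by rw [hb']; field_simp) (-(Module.finrank ℝ V / 2) : ℂ)
  have hexp (v : V) : complexHeatKernel A v * complexHeatKernel B (w - v) =
      ((4 * (Real.pi : ℂ) * A) ^ (-(Module.finrank ℝ V / 2) : ℂ) *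
        (4 * (Real.pi : ℂ) * B) ^ (-(Module.finrank ℝ V / 2) : ℂ) *
        Complex.exp (-(‖w‖ : ℂ) ^ 2 / (4 * B))) *
      Complex.exp (-b * (‖v‖ : ℂ) ^ 2 + (2 * B)⁻¹ * (inner ℝ w v : ℝ)) := by
    have hn : (‖w - v‖ : ℂ) ^ 2 = (‖w‖ : ℂ) ^ 2 - 2 * (inner ℝ w v : ℝ) + (‖v‖ : ℂ) ^ 2 := by
      exact_mod_cast norm_sub_sq_real w v
    have he : Complex.exp (-(‖v‖ : ℂ) ^ 2 / (4 * A)) *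
          Complex.exp (-(‖w - v‖ : ℂ) ^ 2 / (4 * B)) =
        Complex.exp (-(‖w‖ : ℂ) ^ 2 / (4 * B)) *
          Complex.exp (-b * (‖v‖ : ℂ) ^ 2 + (2 * B)⁻¹ * (inner ℝ w v : ℝ)) := by
      rw [← Complex.exp_add, ← Complex.exp_add, hn, hb]
      congr 1
      field_simp
      ring
    unfold complexHeatKernel
    linear_combination ((4 * (Real.pi : ℂ) * A) ^ (-(Module.finrank ℝ V / 2) : ℂ) *
        (4 * (Real.pi : ℂ) * B) ^ (-(Module.finrank ℝ V / 2) : ℂ)) * he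
  rw [← integral_add_right_eq_self _ q]
  have hshift (v : V) : r - (v + q) = w - v := by rw [hw]; abel
  simp only [add_sub_cancel_right, hshift, hexp]
  rw [integral_const_mul, GaussianFourier.integral_cexp_neg_mul_sq_norm_add hbre, hpow,
    complexHeatKernel]
  have hcancel : ((Real.pi : ℂ) / b) ^ (-(Module.finrank ℝ V / 2) : ℂ) *
      ((Real.pi : ℂ) / b) ^ (Module.finrank ℝ V / 2 : ℂ) = 1 := by
    rw [← Complex.cpow_add _ _ (div_ne_zero hpi hb0)]
    simp
  have he : Complex.exp (-(‖w‖ : ℂ) ^ 2 / (4 * B)) *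
      Complex.exp ((2 * B)⁻¹ ^ 2 * (‖w‖ : ℂ) ^ 2 / (4 * b)) =
      Complex.exp (-(‖w‖ : ℂ) ^ 2 / (4 * (A + B))) := by
    rw [← Complex.exp_add, hb']
    congr 1
    field_simp
    ring
  rw [← he]
  linear_combination ((4 * (Real.pi : ℂ) * (A + B)) ^ (-(Module.finrank ℝ V / 2) : ℂ) *
    Complex.exp (-(‖w‖ : ℂ) ^ 2 / (4 * B)) *
      Complex.exp ((2 * B)⁻¹ ^ 2 * (‖w‖ : ℂ) ^ 2 / (4 * b))) * hcancel

end HeatKernel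

lemma Kreg_eq (m ε T : ℝ) (x : ℝ × EuclideanSpace ℝ (Fin 3)) :
    Kreg m ε T x = complexHeatKernel ((ε : ℂ) - Complex.I * T) x.1 *
      complexHeatKernel ((ε : ℂ) + Complex.I * T) x.2 *
      Complex.exp (-(((ε : ℂ) + Complex.I * T) * (m : ℂ) ^ 2)) := by
  have hx : ((‖x.1‖ : ℝ) : ℂ) ^ 2 = ((x.1 ^ 2 : ℝ) : ℂ) := by
    rw [← Complex.ofReal_pow, Real.norm_eq_abs, sq_abs]
  simp only [Kreg, complexHeatKernel, hx, sub_eq_add_neg, Complex.exp_add, Module.finrank_self,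
    finrank_euclideanSpace_fin, neg_div]
  push_cast
  ring

lemma continuous_Kreg (m ε T : ℝ) : Continuous (Kreg m ε T) := by
  unfold Kreg
  fun_prop

lemma integrable_Kreg (m : ℝ) {ε : ℝ} (hε : 0 < ε) (T : ℝ) : Integrable (Kreg m ε T) := by
  rw [funext (Kreg_eq m ε T)]
  exact ((integrable_complexHeatKernel (by simpa)).mul_prod
    (integrable_complexHeatKernel (by simpa))).mul_const _

lemma norm_Kreg_le (m : ℝ) {ε : ℝ} (hε : 0 < ε) (T : ℝ) : ∃ C, ∀ x, ‖Kreg m ε T x‖ ≤ C := by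
  obtain ⟨C₁, h₁⟩ := norm_complexHeatKernel_le (V := ℝ) (A := (ε : ℂ) - Complex.I * T) (by simpa)
  obtain ⟨C₂, h₂⟩ := norm_complexHeatKernel_le (V := EuclideanSpace ℝ (Fin 3))
    (A := (ε : ℂ) + Complex.I * T) (by simpa)
  refine ⟨C₁ * C₂ * ‖Complex.exp (-(((ε : ℂ) + Complex.I * T) * (m : ℂ) ^ 2))‖, fun x => ?_⟩
  rw [Kreg_eq, norm_mul, norm_mul]
  have := (norm_nonneg _).trans (h₁ x.1)
  gcongr
  exacts [h₁ x.1, h₂ x.2]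

/-- The propagation rule for two successive kernels. -/
lemma integral_Kreg_mul (m : ℝ) {ε ε' : ℝ} (hε : 0 < ε) (hε' : 0 < ε') (T T' : ℝ)
    (q r : ℝ × EuclideanSpace ℝ (Fin 3)) :
    ∫ x, Kreg m ε T (x - q) * Kreg m ε' T' (r - x) = Kreg m (ε + ε') (T + T') (r - q) := by
  have hsplit (x : ℝ × EuclideanSpace ℝ (Fin 3)) :
      Kreg m ε T (x - q) * Kreg m ε' T' (r - x) =
      (complexHeatKernel ((ε : ℂ) - Complex.I * T) (x.1 - q.1) *
        complexHeatKernel ((ε' : ℂ) - Complex.I * T') (r.1 - x.1)) *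
      (complexHeatKernel ((ε : ℂ) + Complex.I * T) (x.2 - q.2) *
        complexHeatKernel ((ε' : ℂ) + Complex.I * T') (r.2 - x.2)) *
      (Complex.exp (-(((ε : ℂ) + Complex.I * T) * (m : ℂ) ^ 2)) *
        Complex.exp (-(((ε' : ℂ) + Complex.I * T') * (m : ℂ) ^ 2))) := by
    simp only [Kreg_eq, Prod.fst_sub, Prod.snd_sub]
    ring
  simp only [hsplit]
  rw [integral_mul_const, Measure.volume_eq_prod,
    integral_prod_mul (fun x : ℝ => complexHeatKernel ((ε : ℂ) - Complex.I * T) (x - q.1) *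
      complexHeatKernel ((ε' : ℂ) - Complex.I * T') (r.1 - x))
      (fun y : EuclideanSpace ℝ (Fin 3) =>
        complexHeatKernel ((ε : ℂ) + Complex.I * T) (y - q.2) *
        complexHeatKernel ((ε' : ℂ) + Complex.I * T') (r.2 - y)),
    integral_complexHeatKernel_mul (by simpa) (by simpa),
    integral_complexHeatKernel_mul (by simpa) (by simpa), ← Complex.exp_add, Kreg_eq]
  congr 1
  · congr 2 <;> push_cast <;> ring
  · congr 1
    push_cast
    ring

instance : (volume : Measure (ℝ × EuclideanSpace ℝ (Fin 3))).IsAddRightInvariant :=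
  inferInstanceAs ((volume : Measure ℝ).prod volume).IsAddRightInvariant

lemma integral_chainProd_Kreg (m : ℝ) (n : ℕ) (ε : Fin (n + 1) → ℝ) (hε : ∀ j, 0 < ε j)
    (T : Fin (n + 1) → ℝ) (q0 qN : ℝ × EuclideanSpace ℝ (Fin 3)) :
    ∫ z : Fin n → ℝ × EuclideanSpace ℝ (Fin 3),
      chainProd (n + 1) (fun j => Kreg m (ε j) (T j)) q0 qN z =
        Kreg m (∑ j, ε j) (∑ j, T j) (qN - q0) := by
  induction n generalizing q0 with
  | zero =>
    rw [integral_congr_ae (.of_forall fun z => chainProd_one _ q0 qN z), integral_const]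
    simp [volume_pi, Measure.real]
  | succ n ih =>
    rw [integral_chainProd_succ n (fun j => continuous_Kreg m (ε j) (T j))
      (fun j => integrable_Kreg m (hε j) (T j)) (fun j => norm_Kreg_le m (hε j) (T j))]
    simp only [ih (fun j => ε j.succ) (fun j => hε j.succ) (fun j => T j.succ)]
    rw [integral_Kreg_mul m (hε 0)
      (Finset.sum_pos (fun j _ => hε j.succ) Finset.univ_nonempty),
      Fin.sum_univ_succ ε, Fin.sum_univ_succ T]

/-- **Composition of regularized free-particle kernels** (Theorem "Evaluation
of the Path Integral" in regularized form). Integrating the product of one-step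
kernels over all intermediate spacetime points yields the kernel with summed
regularization and path-parameter intervals. -/
theorem kernel_composition (m : ℝ) (N : ℕ) (hN : 1 ≤ N)
    (ε : Fin N → ℝ) (hε : ∀ j, 0 < ε j) (T : Fin N → ℝ)
    (q0 qN : ℝ × EuclideanSpace ℝ (Fin 3)) :
    Integrable (fun z : Fin (N - 1) → ℝ × EuclideanSpace ℝ (Fin 3) =>
        ∏ j : Fin N,
          Kreg m (ε j) (T j)
            (chainPoint N q0 qN z j.succ - chainPoint N q0 qN z j.castSucc)) ∧
    (∫ z : Fin (N - 1) → ℝ × EuclideanSpace ℝ (Fin 3),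
        ∏ j : Fin N,
          Kreg m (ε j) (T j)
            (chainPoint N q0 qN z j.succ - chainPoint N q0 qN z j.castSucc))
      = Kreg m (∑ j, ε j) (∑ j, T j) (qN - q0) := by
  obtain ⟨n, rfl⟩ := Nat.exists_eq_add_of_le' hN
  exact ⟨(integrable_chainProd n (fun j => continuous_Kreg m (ε j) (T j))
    (fun j => integrable_Kreg m (hε j) (T j)) (fun j => norm_Kreg_le m (hε j) (T j))).1 q0 qN,
    integral_chainProd_Kreg m n ε hε T q0 qN⟩
end

section
/- Let E > 0, ε > 0, and t ∈ ℝ, and let w denote the principal square root of the complex number E² − iε (so Re w > 0 and Im w < 0). Then the absolutely convergent Lebesgue integral satisfies (−i/(2π)) ∫_ℝ e^{−iωt} / (E² − ω² − iε) dω = e^{−i w |t|} / (2w). -/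
open MeasureTheory Complex

/-- The two-sided exponential `x ↦ exp (-a |x|)` is integrable when `0 < a.re`. -/
lemma integrable_exp_neg_mul_abs {a : ℂ} (ha : 0 < a.re) :
    Integrable fun x : ℝ ↦ cexp (-a * (|x| : ℝ)) := by
  rw [← integrableOn_univ, ← Set.Iic_union_Ioi (a := (0 : ℝ)), integrableOn_union]
  constructor
  · refine (integrableOn_exp_mul_complex_Iic ha 0).congr_fun (fun x hx ↦ ?_) measurableSet_Iic
    simp [abs_of_nonpos (Set.mem_Iic.1 hx)]
  · refine (integrableOn_exp_mul_complex_Ioi (a := -a) (by simpa) 0).congr_fun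
      (fun x hx ↦ ?_) measurableSet_Ioi
    simp [abs_of_pos (Set.mem_Ioi.1 hx)]

lemma sq_add_sq_eq_mul (a z : ℂ) : a ^ 2 + z ^ 2 = (a + z * I) * (a - z * I) := by
  linear_combination z ^ 2 * I_sq

lemma add_mul_I_ne_zero {a : ℂ} (ha : 0 < a.re) (y : ℝ) : a + y * I ≠ 0 := by
  intro h
  have := congrArg re h
  simp at this
  exact ha.ne' this

/-- Partial fractions for the Lorentzian `1 / (a ^ 2 + y ^ 2)`. -/
lemma inv_add_inv_eq_lorentzian {a : ℂ} (ha : 0 < a.re) (y : ℝ) :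
    (a + y * I)⁻¹ + (a - y * I)⁻¹ = 2 * a / (a ^ 2 + (y : ℂ) ^ 2) := by
  have h₁ := add_mul_I_ne_zero ha y
  have h₂ : a - y * I ≠ 0 := by simpa [sub_eq_add_neg] using add_mul_I_ne_zero ha (-y)
  rw [sq_add_sq_eq_mul]
  field_simp
  ring

/-- The Fourier transform of the two-sided exponential is a Lorentzian. -/
lemma integral_exp_mul_I_mul_exp_neg_mul_abs {a : ℂ} (ha : 0 < a.re) (y : ℝ) :
    ∫ x : ℝ, cexp (-(y * I) * x) * cexp (-a * (|x| : ℝ)) = 2 * a / (a ^ 2 + (y : ℂ) ^ 2) := by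
  have hl : 0 < (a - y * I).re := by simpa
  have hr : (-(a + y * I)).re < 0 := by simpa
  have eql : Set.EqOn (fun x : ℝ ↦ cexp ((a - y * I) * x))
      (fun x : ℝ ↦ cexp (-(y * I) * x) * cexp (-a * (|x| : ℝ))) (Set.Iic 0) := fun x hx ↦ by
    simp only [abs_of_nonpos (Set.mem_Iic.1 hx), ← Complex.exp_add]
    push_cast
    ring_nf
  have eqr : Set.EqOn (fun x : ℝ ↦ cexp (-(a + y * I) * x))
      (fun x : ℝ ↦ cexp (-(y * I) * x) * cexp (-a * (|x| : ℝ))) (Set.Ioi 0) := fun x hx ↦ by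
    simp only [abs_of_pos (Set.mem_Ioi.1 hx), ← Complex.exp_add]
    ring_nf
  rw [← intervalIntegral.integral_Iic_add_Ioi (b := (0 : ℝ))
      ((integrableOn_exp_mul_complex_Iic hl 0).congr_fun eql measurableSet_Iic)
      ((integrableOn_exp_mul_complex_Ioi hr 0).congr_fun eqr measurableSet_Ioi),
    ← setIntegral_congr_fun measurableSet_Iic eql, ← setIntegral_congr_fun measurableSet_Ioi eqr,
    integral_exp_mul_complex_Iic hl, integral_exp_mul_complex_Ioi hr,
    ← inv_add_inv_eq_lorentzian ha]
  simp only [ofReal_zero, mul_zero, Complex.exp_zero, neg_div_neg_eq, one_div]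
  ring

lemma integrable_inv_sq_add_sq {c : ℝ} (hc : 0 < c) :
    Integrable fun x : ℝ ↦ (c ^ 2 + x ^ 2)⁻¹ := by
  refine ((integrable_inv_one_add_sq.comp_div hc.ne').const_mul (c ^ 2)⁻¹).congr
    (.of_forall fun x ↦ ?_)
  simp only
  rw [← mul_inv]
  congr 1
  field_simp

lemma integrable_lorentzian {a : ℂ} (ha : 0 < a.re) :
    Integrable fun y : ℝ ↦ (a ^ 2 + (y : ℂ) ^ 2)⁻¹ := by
  have h := integrable_inv_sq_add_sq ha
  refine ((h.comp_add_right a.im).add (h.comp_sub_right a.im)).mono'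
    (Measurable.aestronglyMeasurable (by fun_prop)) (.of_forall fun y ↦ ?_)
  have h₁ : ‖a + y * I‖ ^ 2 = a.re ^ 2 + (y + a.im) ^ 2 := by
    rw [← normSq_eq_norm_sq, normSq_apply]; simp; ring
  have h₂ : ‖a - y * I‖ ^ 2 = a.re ^ 2 + (y - a.im) ^ 2 := by
    rw [← normSq_eq_norm_sq, normSq_apply]; simp; ring
  simp only [Pi.add_apply]
  rw [← h₁, ← h₂, sq_add_sq_eq_mul, norm_inv, norm_mul, mul_inv, ← inv_pow, ← inv_pow]
  nlinarith [sq_nonneg (‖a + y * I‖⁻¹ - ‖a - y * I‖⁻¹), sq_nonneg (‖a + y * I‖⁻¹),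
    sq_nonneg (‖a - y * I‖⁻¹)]

open scoped FourierTransform in
/-- The inverse Fourier transform of a Lorentzian is the two-sided exponential. -/
lemma integral_exp_div_sq_add_sq {a : ℂ} (ha : 0 < a.re) (t : ℝ) :
    ∫ ω : ℝ, cexp (-I * ω * t) / (a ^ 2 + (ω : ℂ) ^ 2) =
      Real.pi / a * cexp (-a * (|t| : ℝ)) := by
  have ha₀ : a ≠ 0 := by rintro rfl; simp at ha
  set f : ℝ → ℂ := fun x ↦ cexp (-a * (|x| : ℝ)) with hf
  have hF : 𝓕 f = fun ξ : ℝ ↦ 2 * a * (a ^ 2 + ((2 * Real.pi * ξ : ℝ) : ℂ) ^ 2)⁻¹ := by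
    ext ξ
    rw [Real.fourier_real_eq_integral_exp_smul, ← div_eq_mul_inv,
      ← integral_exp_mul_I_mul_exp_neg_mul_abs ha]
    refine integral_congr_ae (.of_forall fun x ↦ ?_)
    simp only [hf, smul_eq_mul]
    congr 2
    push_cast
    ring
  have hFint : Integrable (𝓕 f) := by
    rw [hF]
    exact ((integrable_lorentzian ha).comp_mul_left' Real.two_pi_pos.ne').const_mul _
  have hinv := congrFun (Continuous.fourierInv_fourier_eq (f := f) (by fun_prop)
    (integrable_exp_neg_mul_abs ha) hFint) (-t)
  rw [Real.fourierInv_eq_fourier_neg, Real.fourier_real_eq_integral_exp_smul, hF] at hinv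
  have hsub := Measure.integral_comp_mul_left
    (fun ω : ℝ ↦ cexp (-I * ω * t) / (a ^ 2 + (ω : ℂ) ^ 2)) (2 * Real.pi)
  have hlhs : f (-t) = 2 * a *
      ∫ ξ : ℝ, cexp (-I * (2 * Real.pi * ξ : ℝ) * t) /
        (a ^ 2 + ((2 * Real.pi * ξ : ℝ) : ℂ) ^ 2) := by
    rw [← hinv, ← integral_const_mul]
    refine integral_congr_ae (.of_forall fun x ↦ ?_)
    simp only [smul_eq_mul, div_eq_mul_inv]
    rw [show ((-2 * Real.pi * x * - -t : ℝ) : ℂ) * I = -I * (2 * Real.pi * x : ℝ) * t by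
      push_cast; ring]
    ring
  rw [hsub, abs_of_pos (inv_pos.2 Real.two_pi_pos), real_smul] at hlhs
  simp only [hf, abs_neg] at hlhs
  rw [hlhs]
  generalize ∫ ω : ℝ, cexp (-I * ω * t) / (a ^ 2 + (ω : ℂ) ^ 2) = J
  have : (Real.pi : ℂ) ≠ 0 := ofReal_ne_zero.2 Real.pi_ne_zero
  push_cast
  field_simp

lemma cpow_half_sq (z : ℂ) : (z ^ (1 / 2 : ℂ)) ^ 2 = z := by
  simp

/-- The principal square root of a point of the open lower half plane lies in it too. -/
lemma im_cpow_half_neg {z : ℂ} (hz : z.im < 0) : (z ^ (1 / 2 : ℂ)).im < 0 := by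
  have hz₀ : z ≠ 0 := by rintro rfl; simp at hz
  have harg : z.arg < 0 := arg_neg_iff.2 hz
  rw [cpow_def_of_ne_zero hz₀, exp_im]
  refine mul_neg_of_pos_of_neg (Real.exp_pos _) (Real.sin_neg_of_neg_of_neg_pi_lt ?_ ?_)
  all_goals
    have him : (log z * (1 / 2)).im = z.arg / 2 := by
      rw [show (1 / 2 : ℂ) = ((1 / 2 : ℝ) : ℂ) by norm_num, im_mul_ofReal, log_im]; ring
    rw [him]
    linarith [neg_pi_lt_arg z, Real.pi_pos]

/-- **Frequency integral of the regularized Feynman propagator** (exact form).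
For `E > 0`, `ε > 0`, `t ∈ ℝ`, with `w` the principal square root of
`E² − iε`, one has
`(−i/(2π)) ∫_ℝ e^{−iωt}/(E² − ω² − iε) dω = e^{−iw|t|}/(2w)`. -/
theorem propagator_frequency_integral (E ε t : ℝ) (hE : 0 < E) (hε : 0 < ε)
    (w : ℂ) (hw : w = ((E : ℂ) ^ 2 - (ε : ℂ) * Complex.I) ^ ((1 / 2 : ℂ))) :
    (-Complex.I / (2 * (Real.pi : ℂ))) *
        ∫ ω : ℝ, Complex.exp (-Complex.I * (ω : ℂ) * (t : ℂ)) /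
          ((E : ℂ) ^ 2 - (ω : ℂ) ^ 2 - (ε : ℂ) * Complex.I)
      = Complex.exp (-Complex.I * w * (|t| : ℝ)) / (2 * w) := by
  have hw_sq : w ^ 2 = (E : ℂ) ^ 2 - ε * I := by
    rw [hw, cpow_half_sq]
  have hw_im : w.im < 0 := by
    rw [hw]
    refine im_cpow_half_neg ?_
    simpa [sq] using hε
  have hw₀ : w ≠ 0 := by rintro rfl; simp at hw_im
  have hint : ∫ ω : ℝ, cexp (-I * ω * t) / ((E : ℂ) ^ 2 - (ω : ℂ) ^ 2 - ε * I) =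
      -(Real.pi / (I * w) * cexp (-(I * w) * (|t| : ℝ))) := by
    rw [← integral_exp_div_sq_add_sq (a := I * w) (by simpa), ← integral_neg]
    refine integral_congr_ae (.of_forall fun ω ↦ ?_)
    simp only
    rw [← div_neg]
    congr 1
    linear_combination -hw_sq + w ^ 2 * I_sq
  have hpi : (Real.pi : ℂ) ≠ 0 := ofReal_ne_zero.2 Real.pi_ne_zero
  rw [hint, neg_mul I w]
  field_simp
end
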